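/- There exist absolute constants c, C > 0 such that the following holds. Let M ≥ 2, let μ̂_j = A_j y + b_j (j = 1,…,M) be affine estimators with ‖A_j‖_op ≤ 1 for all j, where the noise ξ has i.i.d. N(0,σ²) coordinates, and let Ĵ ∈ argmin_{j=1,…,M} C_p(e_j). Then for every 0 < ε < c and every x > 0, with probability at least 1 − 2exp(−x), ‖μ̂_Ĵ − f‖² ≤ (1+ε) min_{k=1,…,M} ‖μ̂_k − f‖² + Cσ²(x + 2 log M)/ε. -/

import Mathlib

open MeasureTheory ProbabilityTheory Finset

noncomputable section

/-- Squared Euclidean norm on `Fin n → ℝ`. -/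
def sqNorm {n : ℕ} (v : Fin n → ℝ) : ℝ := ∑ i, (v i) ^ 2

/-- The simplex `Λ^M` of probability vectors in `ℝ^M`. -/
def simplex (M : ℕ) : Set (Fin M → ℝ) := {θ | (∀ j, 0 ≤ θ j) ∧ ∑ j, θ j = 1}

/-- Operator norm (ℓ²→ℓ²) of a square matrix. -/
def opNorm {n : ℕ} (A : Matrix (Fin n) (Fin n) ℝ) : ℝ :=
  sSup {c | ∃ x : Fin n → ℝ, sqNorm x ≤ 1 ∧ c = Real.sqrt (sqNorm (A.mulVec x))}

/-- The distribution of a vector with i.i.d. `N(0,σ²)` coordinates. -/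
def gaussPi (n : ℕ) (σ : ℝ) : Measure (Fin n → ℝ) :=
  Measure.pi fun _ => gaussianReal 0 ⟨σ ^ 2, sq_nonneg σ⟩

/-- The aggregated affine estimator `μ̂_θ = A_θ y + b_θ = ∑_j θ_j (A_j y + b_j)`. -/
def muV {n M : ℕ} (A : Fin M → Matrix (Fin n) (Fin n) ℝ) (b : Fin M → Fin n → ℝ)
    (y : Fin n → ℝ) (θ : Fin M → ℝ) : Fin n → ℝ :=
  ∑ j, θ j • ((A j).mulVec y + b j)

/-- Mallows' `C_p` criterion. -/
def Cp {n M : ℕ} (A : Fin M → Matrix (Fin n) (Fin n) ℝ) (b : Fin M → Fin n → ℝ)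
    (σ : ℝ) (y : Fin n → ℝ) (θ : Fin M → ℝ) : ℝ :=
  sqNorm (muV A b y θ) - 2 * ∑ i, y i * muV A b y θ i
    + 2 * σ ^ 2 * ∑ j, θ j * (A j).trace

/-- The penalty `pen(θ) = ∑_j θ_j ‖μ̂_θ - μ̂_j‖²`. -/
def pen {n M : ℕ} (A : Fin M → Matrix (Fin n) (Fin n) ℝ) (b : Fin M → Fin n → ℝ)
    (y : Fin n → ℝ) (θ : Fin M → ℝ) : ℝ :=
  ∑ j, θ j * sqNorm (muV A b y θ - ((A j).mulVec y + b j))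

/-- The penalized criterion `H_pen(θ) = C_p(θ) + pen(θ)/2`. -/
def Hpen {n M : ℕ} (A : Fin M → Matrix (Fin n) (Fin n) ℝ) (b : Fin M → Fin n → ℝ)
    (σ : ℝ) (y : Fin n → ℝ) (θ : Fin M → ℝ) : ℝ :=
  Cp A b σ y θ + pen A b y θ / 2


lemma aux_exp (t : ℝ) (ht : |t| ≤ 1/4) : Real.exp (-(t + t^2)) ≤ 1 - t := by
  have h := abs_le.1 ht
  rw [Real.exp_neg, inv_le_comm₀ (Real.exp_pos _) (by linarith [h.2])]
  rw [inv_le_iff_one_le_mul₀ (by linarith [h.2])]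
  rcases le_total 0 t with h0 | h0
  · have := Real.quadratic_le_exp_of_nonneg (x := t + t^2) (by positivity)
    have h2 : 1 + t + t^2 + t^2/2 ≤ Real.exp (t+t^2) := by nlinarith [pow_nonneg h0 3, pow_nonneg h0 4]
    have h3 := mul_le_mul_of_nonneg_right h2 (by linarith [h.2] : 0 ≤ 1 - t)
    nlinarith [sq_nonneg t, mul_nonneg (sq_nonneg t) (by linarith [h.2] : 0 ≤ 1/4 - t)]
  · have h2 := Real.add_one_le_exp (t + t^2)
    have h3 := mul_le_mul_of_nonneg_right h2 (by linarith [h.2] : 0 ≤ 1 - t)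
    nlinarith [mul_nonneg (sq_nonneg t) (by linarith : 0 ≤ -t)]

lemma aux_quad (b c x : ℝ) (hb : 0 < b) :
    Real.exp (-b * x^2 + c * x) = Real.exp (c^2/(4*b)) * Real.exp (-b * (x - c/(2*b))^2) := by
  rw [← Real.exp_add]; congr 1; field_simp; ring

lemma aux_pdf (a c x : ℝ) : gaussianPDFReal 0 1 x * Real.exp (a * x^2 + c * x)
    = (√(2 * Real.pi))⁻¹ * Real.exp (-(1/2 - a) * x^2 + c * x) := by
  rw [gaussianPDFReal, mul_assoc, ← Real.exp_add]
  simp only [NNReal.coe_one, mul_one, sub_zero]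
  congr 2; ring

lemma one_dim_integrable (a c : ℝ) (ha : |a| ≤ 1/8) :
    Integrable (fun x => Real.exp (a * x^2 + c * x)) (gaussianReal 0 1) := by
  have h := abs_le.1 ha
  have hb : 0 < 1/2 - a := by linarith [h.2]
  rw [gaussianReal_of_var_ne_zero _ one_ne_zero,
    integrable_withDensity_iff_integrable_smul' (measurable_gaussianPDF 0 1)
      (by simp [gaussianPDF_lt_top])]
  simp only [toReal_gaussianPDF, smul_eq_mul, aux_pdf]
  apply Integrable.const_mul
  simp only [aux_quad _ c _ hb]
  apply Integrable.const_mul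
  exact (integrable_exp_neg_mul_sq hb).comp_sub_right (c/(2*(1/2-a)))

lemma one_dim (a c : ℝ) (ha : |a| ≤ 1/8) :
    ∫ x, Real.exp (a * x^2 + c * x) ∂(gaussianReal 0 1) ≤ Real.exp (a + 2*a^2 + c^2) := by
  have h := abs_le.1 ha
  have hb : 0 < 1/2 - a := by linarith [h.2]
  rw [integral_gaussianReal_eq_integral_smul one_ne_zero]
  simp only [smul_eq_mul, aux_pdf]
  rw [integral_const_mul]
  simp only [aux_quad _ c _ hb]
  rw [integral_const_mul,
    integral_sub_right_eq_self (fun x => Real.exp (-(1/2 - a) * x^2)), integral_gaussian]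
  have h1 : (√(2 * Real.pi))⁻¹ * √(Real.pi / (1/2 - a)) ≤ Real.exp (a + 2*a^2) := by
    rw [← Real.sqrt_inv, ← Real.sqrt_mul (by positivity)]
    apply Real.sqrt_le_iff.2 ⟨by positivity, ?_⟩
    have e := aux_exp (2*a) (by rw [abs_mul]; norm_num; linarith)
    rw [Real.exp_neg, inv_le_comm₀ (Real.exp_pos _) (by linarith)] at e
    calc _ = (1 - 2*a)⁻¹ := by
          have : 1 - 2*a ≠ 0 := by linarith
          have := Real.pi_ne_zero
          field_simp
          
      _ ≤ _ := e
      _ = _ := by rw [← Real.exp_nat_mul]; congr 1; push_cast; ring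
  have h2 : Real.exp (c^2/(4*(1/2-a))) ≤ Real.exp (c^2) := by
    apply Real.exp_le_exp.2
    rw [div_le_iff₀ (by linarith)]
    nlinarith [sq_nonneg c]
  calc _ = ((√(2 * Real.pi))⁻¹ * √(Real.pi / (1/2 - a))) * Real.exp (c^2/(4*(1/2-a))) := by ring
    _ ≤ Real.exp (a + 2*a^2) * Real.exp (c^2) := by gcongr
    _ = _ := by rw [← Real.exp_add]

open scoped InnerProductSpace
open LinearMap (adjoint)

lemma quad_expand {E : Type*} [NormedAddCommGroup E] [InnerProductSpace ℝ E] [FiniteDimensional ℝ E]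
    (D : E →ₗ[ℝ] E) (d : E) (e : ℝ) (z : E) :
    2 * ⟪z, D z⟫_ℝ + 2 * ⟪z, d⟫_ℝ - e * ‖D z + d‖^2
      = ⟪z, (D + adjoint D - e • (adjoint D ∘ₗ D)) z⟫_ℝ + 2 * ⟪z, d - e • adjoint D d⟫_ℝ
        - e * ‖d‖^2 := by
  simp only [LinearMap.sub_apply, LinearMap.add_apply, LinearMap.smul_apply, LinearMap.comp_apply,
    inner_sub_right, inner_add_right, inner_smul_right, LinearMap.adjoint_inner_right]
  rw [norm_add_sq_real, real_inner_self_eq_norm_sq, real_inner_comm z (D z)]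
  ring

lemma mgf_bound {n : ℕ} (D : EuclideanSpace ℝ (Fin n) →ₗ[ℝ] EuclideanSpace ℝ (Fin n))
    (d : EuclideanSpace ℝ (Fin n)) (hD : ∀ x, ‖D x‖ ≤ 2 * ‖x‖) (e : ℝ) (he : 0 < e) (he2 : e ≤ 1/2) :
    Integrable (fun z => Real.exp ((e/32) * (2 * ⟪z, D z⟫_ℝ + 2 * ⟪z, d⟫_ℝ - e * ‖D z + d‖^2
      - 2 * LinearMap.trace ℝ _ D))) (stdGaussian (EuclideanSpace ℝ (Fin n))) ∧
    ∫ z, Real.exp ((e/32) * (2 * ⟪z, D z⟫_ℝ + 2 * ⟪z, d⟫_ℝ - e * ‖D z + d‖^2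
      - 2 * LinearMap.trace ℝ _ D)) ∂(stdGaussian (EuclideanSpace ℝ (Fin n))) ≤ 1 := by
  set T := D + adjoint D - e • (adjoint D ∘ₗ D) with hTdef
  have hT : T.IsSymmetric := by
    intro x y
    simp only [hTdef, LinearMap.sub_apply, LinearMap.add_apply, LinearMap.smul_apply,
      LinearMap.comp_apply, inner_sub_right, inner_add_right, inner_smul_right,
      inner_sub_left, inner_add_left, inner_smul_left, LinearMap.adjoint_inner_right,
      LinearMap.adjoint_inner_left]
    simp; ring
  have hn : Module.finrank ℝ (EuclideanSpace ℝ (Fin n)) = n := by simp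
  set b := hT.eigenvectorBasis hn with hb
  set q := hT.eigenvalues hn with hq
  have hTb : ∀ i, T (b i) = q i • b i := fun i => hT.apply_eigenvectorBasis hn i
  set v := d - e • adjoint D d with hv
  set w : Fin n → ℝ := fun i => ⟪b i, v⟫_ℝ with hw
  have hnb : ∀ i, ‖b i‖ = 1 := fun i => b.orthonormal.1 i
  have hq1 : ∀ i, q i = 2 * ⟪b i, D (b i)⟫_ℝ - e * ‖D (b i)‖^2 := by
    intro i
    have h1 : ⟪b i, T (b i)⟫_ℝ = q i := by
      rw [hTb, inner_smul_right, real_inner_self_eq_norm_sq, hnb]; simp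
    have h2 := quad_expand D 0 e (b i)
    rw [← hTdef] at h2
    simp only [map_zero, smul_zero, sub_zero, inner_zero_right, add_zero, norm_zero, mul_zero, h1] at h2
    linarith
  have hDb : ∀ i, ‖D (b i)‖ ≤ 2 := fun i => by simpa [hnb] using hD (b i)
  have hqb : ∀ i, |q i| ≤ 4 * ‖D (b i)‖ := by
    intro i
    have h1 := abs_real_inner_le_norm (b i) (D (b i))
    rw [hnb, one_mul] at h1
    have h1 := abs_le.1 h1
    have h0 := norm_nonneg (D (b i))
    have h3 : e * ‖D (b i)‖^2 ≤ 2 * ‖D (b i)‖ := by nlinarith [hDb i, mul_nonneg he.le h0]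
    have h4 : 0 ≤ e * ‖D (b i)‖^2 := by positivity
    rw [hq1, abs_le]; constructor <;> linarith
  have ha : ∀ i, |e/32 * q i| ≤ 1/8 := by
    intro i
    rw [abs_mul, abs_of_pos (by positivity)]
    nlinarith [hqb i, hDb i, abs_nonneg (q i)]
  have hvn : ‖v‖ ≤ 2 * ‖d‖ := by
    have hadj : ‖adjoint D d‖ ≤ 2 * ‖d‖ := by
      have h1 : ‖adjoint D d‖^2 = ⟪d, D (adjoint D d)⟫_ℝ := by
        rw [← real_inner_self_eq_norm_sq, LinearMap.adjoint_inner_left]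
      have h2 := real_inner_le_norm d (D (adjoint D d))
      have h3 := hD (adjoint D d)
      by_contra hlt
      push Not at hlt
      nlinarith [norm_nonneg d, norm_nonneg (adjoint D d), mul_le_mul_of_nonneg_left h3 (norm_nonneg d)]
    calc ‖v‖ ≤ ‖d‖ + ‖e • adjoint D d‖ := norm_sub_le _ _
      _ = ‖d‖ + e * ‖adjoint D d‖ := by rw [norm_smul, Real.norm_of_nonneg he.le]
      _ ≤ _ := by nlinarith [norm_nonneg d]
  have hwsum : ∑ i, (w i)^2 = ‖v‖^2 := b.sum_sq_inner_right v
  have hpt : ∀ x : Fin n → ℝ, (fun z => Real.exp ((e/32) * (2 * ⟪z, D z⟫_ℝ + 2 * ⟪z, d⟫_ℝ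
        - e * ‖D z + d‖^2 - 2 * LinearMap.trace ℝ _ D))) (∑ i, x i • b i) =
      Real.exp (-(e/32) * (e * ‖d‖^2 + 2 * LinearMap.trace ℝ _ D)) *
        ∏ i, Real.exp ((e/32 * q i) * (x i)^2 + (e/16 * w i) * x i) := by
    intro x
    simp only
    rw [quad_expand, ← hTdef, ← hv, ← Real.exp_sum, ← Real.exp_add]
    congr 1
    have h1 : ⟪∑ i, x i • b i, T (∑ i, x i • b i)⟫_ℝ = ∑ i, q i * (x i)^2 := by
      have : T (∑ i, x i • b i) = ∑ i, (x i * q i) • b i := by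
        simp only [map_sum, map_smul, hTb, smul_smul]
      rw [this, b.orthonormal.inner_sum]
      apply Finset.sum_congr rfl; intro i _; simp; ring
    have h2 : ⟪∑ i, x i • b i, v⟫_ℝ = ∑ i, w i * x i := by
      rw [sum_inner]
      apply Finset.sum_congr rfl; intro i _; rw [inner_smul_left, hw]; simp; ring
    rw [h1, h2, Finset.sum_add_distrib]
    simp only [mul_assoc, ← Finset.mul_sum]
    ring
  have hint : Integrable (fun x : Fin n → ℝ =>
      ∏ i, Real.exp ((e/32 * q i) * (x i)^2 + (e/16 * w i) * x i))
      (Measure.pi fun _ => gaussianReal 0 1) :=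
    Integrable.fintype_prod (f := fun i x => Real.exp ((e/32 * q i) * x^2 + (e/16 * w i) * x))
      (fun i => one_dim_integrable _ _ (ha i))
  have hD' : Continuous D := D.continuous_of_finiteDimensional
  have hmeas : Continuous (fun z => Real.exp ((e/32) * (2 * ⟪z, D z⟫_ℝ + 2 * ⟪z, d⟫_ℝ
        - e * ‖D z + d‖^2 - 2 * LinearMap.trace ℝ _ D))) := by fun_prop
  have hmap : Measurable (fun x : Fin n → ℝ => ∑ i, x i • b i) := by fun_prop
  rw [stdGaussian_eq_map_pi_orthonormalBasis b]
  constructor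
  · rw [integrable_map_measure hmeas.aestronglyMeasurable hmap.aemeasurable]
    refine (hint.const_mul (Real.exp (-(e/32) * (e * ‖d‖^2 + 2 * LinearMap.trace ℝ _ D)))).congr ?_
    exact Filter.Eventually.of_forall fun x => (hpt x).symm
  · rw [integral_map hmap.aemeasurable hmeas.aestronglyMeasurable]
    simp only [hpt]
    rw [integral_const_mul,
      integral_fintype_prod_eq_prod (f := fun i x => Real.exp ((e/32 * q i) * x^2 + (e/16 * w i) * x))]
    have hp : ∏ i, ∫ x, Real.exp ((e/32 * q i) * x^2 + (e/16 * w i) * x) ∂(gaussianReal 0 1)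
        ≤ ∏ i, Real.exp ((e/32 * q i) + 2 * (e/32 * q i)^2 + (e/16 * w i)^2) := by
      apply Finset.prod_le_prod
      · intro i _; exact integral_nonneg fun x => (Real.exp_pos _).le
      · intro i _; exact one_dim _ _ (ha i)
    refine (mul_le_mul_of_nonneg_left hp (Real.exp_pos _).le).trans ?_
    rw [← Real.exp_sum, ← Real.exp_add, Real.exp_le_one_iff]
    have hs1 : ∑ i, ((e/32 * q i) + 2 * (e/32 * q i)^2 + (e/16 * w i)^2)
        ≤ ∑ i, ((e/16) * ⟪b i, D (b i)⟫_ℝ + (e/16)^2 * (w i)^2) := by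
      apply Finset.sum_le_sum
      intro i _
      have h1 : (q i)^2 ≤ 16 * ‖D (b i)‖^2 := by
        have := pow_le_pow_left₀ (abs_nonneg _) (hqb i) 2
        rw [sq_abs] at this; linarith
      have h2 := mul_le_mul_of_nonneg_left h1 (sq_nonneg e)
      have h3 := hq1 i
      have h4 : e * q i = 2 * e * ⟪b i, D (b i)⟫_ℝ - e^2 * ‖D (b i)‖^2 := by rw [h3]; ring
      nlinarith
    rw [Finset.sum_add_distrib (f := fun i => (e/16) * ⟪b i, D (b i)⟫_ℝ), ← Finset.mul_sum,
      ← Finset.mul_sum, hwsum, ← LinearMap.trace_eq_sum_inner] at hs1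
    have hv2 : ‖v‖^2 ≤ 4 * ‖d‖^2 := by
      have := pow_le_pow_left₀ (norm_nonneg _) hvn 2; linarith
    have h5 := mul_le_mul_of_nonneg_left hv2 (sq_nonneg e)
    have h6 : 0 ≤ e^2 * ‖d‖^2 := by positivity
    nlinarith

lemma sqNorm_eq {n : ℕ} (v : Fin n → ℝ) : sqNorm v = ‖WithLp.toLp 2 v‖^2 := by
  rw [EuclideanSpace.real_norm_sq_eq]; rfl

lemma tail {n : ℕ} (D : Matrix (Fin n) (Fin n) ℝ) (d : Fin n → ℝ)
    (hD : ∀ x, sqNorm (D.mulVec x) ≤ 4 * sqNorm x) (e : ℝ) (he : 0 < e) (he2 : e ≤ 1/2) (u : ℝ) :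
    (Measure.pi fun _ : Fin n => gaussianReal 0 1) {η | 32 * u / e ≤
      2 * (η ⬝ᵥ D.mulVec η) + 2 * (η ⬝ᵥ d) - e * sqNorm (D.mulVec η + d) - 2 * D.trace}
      ≤ ENNReal.ofReal (Real.exp (-u)) := by
  set L := Matrix.toEuclideanLin D with hL
  have hLa : ∀ x : Fin n → ℝ, L (WithLp.toLp 2 x) = WithLp.toLp 2 (D.mulVec x) := fun x => rfl
  obtain ⟨h1, h2⟩ := mgf_bound L (WithLp.toLp 2 d) (by
    intro x
    have := hD x.ofLp
    rw [sqNorm_eq, sqNorm_eq, ← hLa] at this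
    refine (sq_le_sq₀ (norm_nonneg _) (by positivity)).1 ?_
    rw [mul_pow]; norm_num; exact this) e he he2
  have htr : LinearMap.trace ℝ _ L = D.trace := by
    rw [LinearMap.trace_eq_sum_inner L (EuclideanSpace.basisFun (Fin n) ℝ)]
    simp [hL, Matrix.trace, EuclideanSpace.inner_single_left]
  rw [← map_pi_eq_stdGaussian] at h1 h2
  have hm : Measurable (WithLp.toLp 2 : (Fin n → ℝ) → EuclideanSpace ℝ (Fin n)) := by fun_prop
  rw [integrable_map_measure h1.aestronglyMeasurable hm.aemeasurable] at h1
  rw [integral_map hm.aemeasurable (by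
    have hD' : Continuous L := L.continuous_of_finiteDimensional
    apply Continuous.aestronglyMeasurable
    fun_prop)] at h2
  have key := mul_meas_ge_le_integral_of_nonneg
    (Filter.Eventually.of_forall fun x => (Real.exp_pos _).le) h1 (Real.exp u)
  have key2 := key.trans h2
  rw [Measure.real_def] at key2
  rw [ENNReal.le_ofReal_iff_toReal_le (measure_ne_top _ _) (Real.exp_pos _).le, Real.exp_neg,
    ← one_div, le_div_iff₀' (Real.exp_pos _)]
  convert key2 using 4
  ext η
  simp only [Set.mem_ofPred_eq, Real.exp_le_exp, htr, hLa]
  have e1 : ∀ a c : Fin n → ℝ, ⟪(WithLp.toLp 2 a : EuclideanSpace ℝ (Fin n)), WithLp.toLp 2 c⟫_ℝ = a ⬝ᵥ c := by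
    intro a c; simp [EuclideanSpace.inner_eq_star_dotProduct, dotProduct_comm]
  rw [e1, e1, sqNorm_eq, ← WithLp.toLp_add, div_le_iff₀ he]
  constructor <;> intro h <;> linarith

lemma sqNorm_nonneg' {n : ℕ} (v : Fin n → ℝ) : 0 ≤ sqNorm v :=
  Finset.sum_nonneg fun _ _ => sq_nonneg _

lemma sqNorm_smul' {n : ℕ} (c : ℝ) (v : Fin n → ℝ) : sqNorm (c • v) = c^2 * sqNorm v := by
  simp [sqNorm, mul_pow, Finset.mul_sum]

lemma sqNorm_sub_le {n : ℕ} (v w : Fin n → ℝ) : sqNorm (v - w) ≤ 2 * sqNorm v + 2 * sqNorm w := by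
  simp only [sqNorm, Finset.mul_sum, ← Finset.sum_add_distrib, Pi.sub_apply]
  apply Finset.sum_le_sum
  intro i _
  nlinarith [sq_nonneg (v i + w i)]

lemma opNorm_bound {n : ℕ} (A : Matrix (Fin n) (Fin n) ℝ) (hA : opNorm A ≤ 1) (x : Fin n → ℝ) :
    sqNorm (A.mulVec x) ≤ sqNorm x := by
  have hbdd : BddAbove {c | ∃ x : Fin n → ℝ, sqNorm x ≤ 1 ∧ c = Real.sqrt (sqNorm (A.mulVec x))} := by
    refine ⟨‖(Matrix.toEuclideanLin A).toContinuousLinearMap‖, ?_⟩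
    rintro c ⟨x, hx, rfl⟩
    rw [sqNorm_eq, Real.sqrt_sq (norm_nonneg _)]
    have h := (Matrix.toEuclideanLin A).toContinuousLinearMap.le_opNorm (WithLp.toLp 2 x)
    rw [sqNorm_eq] at hx
    have hx1 : ‖(WithLp.toLp 2 x : EuclideanSpace ℝ (Fin n))‖ ≤ 1 := by
      nlinarith [norm_nonneg (WithLp.toLp 2 x : EuclideanSpace ℝ (Fin n))]
    exact h.trans (mul_le_of_le_one_right (norm_nonneg _) hx1)
  by_cases h0 : sqNorm x = 0
  · have hx : x = 0 := by
      rw [sqNorm_eq] at h0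
      have := norm_eq_zero.1 (pow_eq_zero_iff two_ne_zero |>.1 h0)
      simpa using this
    rw [hx]; simp
  · have hpos : 0 < sqNorm x := lt_of_le_of_ne (sqNorm_nonneg' x) (Ne.symm h0)
    set r := (Real.sqrt (sqNorm x))⁻¹ with hr
    have hr2 : r^2 = (sqNorm x)⁻¹ := by rw [hr, inv_pow, Real.sq_sqrt hpos.le]
    have h1 : Real.sqrt (sqNorm (A.mulVec (r • x))) ≤ 1 :=
      (le_csSup hbdd ⟨r • x, by rw [sqNorm_smul', hr2, inv_mul_cancel₀ h0], rfl⟩).trans hA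
    rw [Real.sqrt_le_one, Matrix.mulVec_smul, sqNorm_smul', hr2, inv_mul_le_iff₀ hpos, mul_one] at h1
    exact h1

lemma gaussPi_eq (n : ℕ) (σ : ℝ) :
    gaussPi n σ = (Measure.pi fun _ : Fin n => gaussianReal 0 1).map (fun η => σ • η) := by
  have h := Measure.pi_map_pi (μ := fun _ : Fin n => gaussianReal 0 1)
    (f := fun _ x => σ * x) (hμ := fun i => by rw [gaussianReal_map_const_mul]; infer_instance)
    (fun i => by fun_prop)
  have h2 : (fun η : Fin n → ℝ => σ • η) = fun x i => σ * x i := by ext; simp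
  rw [h2, h, gaussPi]
  congr 1
  ext1 i
  rw [gaussianReal_map_const_mul]
  congr 1
  · simp
  · simp; rfl

lemma meas_form {n : ℕ} (D : Matrix (Fin n) (Fin n) ℝ) (d : Fin n → ℝ) (e t s : ℝ) :
    MeasurableSet {ξ : Fin n → ℝ | t ≤ 
      2 * (ξ ⬝ᵥ D.mulVec ξ) + 2 * (ξ ⬝ᵥ d) - e * sqNorm (D.mulVec ξ + d) - s} := by
  apply measurableSet_le (by fun_prop)
  apply Continuous.measurable
  unfold sqNorm Matrix.mulVec dotProduct
  simp only [Pi.add_apply]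
  fun_prop

lemma tail_sigma {n : ℕ} (D : Matrix (Fin n) (Fin n) ℝ) (d : Fin n → ℝ)
    (hD : ∀ x, sqNorm (D.mulVec x) ≤ 4 * sqNorm x) (e : ℝ) (he : 0 < e) (he2 : e ≤ 1/2) (u : ℝ)
    (σ : ℝ) (hσ : σ ≠ 0) :
    gaussPi n σ {ξ | 32 * σ^2 * u / e ≤
      2 * (ξ ⬝ᵥ D.mulVec ξ) + 2 * (ξ ⬝ᵥ d) - e * sqNorm (D.mulVec ξ + d) - 2 * σ^2 * D.trace}
      ≤ ENNReal.ofReal (Real.exp (-u)) := by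
  rw [gaussPi_eq, Measure.map_apply (by fun_prop) (meas_form _ _ _ _ _)]
  refine le_trans (measure_mono ?_) (tail D (σ⁻¹ • d) hD e he he2 u)
  intro η hη
  simp only [Set.mem_preimage, Set.mem_ofPred_eq] at hη ⊢
  have h1 : D.mulVec (σ • η) + d = σ • (D.mulVec η + σ⁻¹ • d) := by
    rw [smul_add, smul_smul, mul_inv_cancel₀ hσ, one_smul, Matrix.mulVec_smul]
  rw [h1, sqNorm_smul', Matrix.mulVec_smul, smul_dotProduct, dotProduct_smul, smul_dotProduct] at hη
  have h2 : η ⬝ᵥ d = σ * (η ⬝ᵥ (σ⁻¹ • d)) := by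
    rw [dotProduct_smul, smul_eq_mul, mul_inv_cancel_left₀ hσ]
  rw [h2] at hη
  simp only [smul_eq_mul] at hη
  have hp : 0 < σ^2 := by positivity
  refine le_of_mul_le_mul_left ?_ hp
  calc _ = 32 * σ^2 * u / e := by ring
    _ ≤ _ := hη
    _ = _ := by ring

lemma Cp_single {n M : ℕ} (A : Fin M → Matrix (Fin n) (Fin n) ℝ) (b : Fin M → Fin n → ℝ)
    (σ : ℝ) (f ξ : Fin n → ℝ) (j : Fin M) :
    Cp A b σ (f + ξ) (Pi.single j 1) = sqNorm ((A j).mulVec (f + ξ) + b j - f) - sqNorm f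
      - 2 * (ξ ⬝ᵥ ((A j).mulVec (f + ξ) + b j)) + 2 * σ^2 * (A j).trace := by
  have h1 : muV A b (f + ξ) (Pi.single j 1) = (A j).mulVec (f + ξ) + b j := by
    unfold muV
    rw [Finset.sum_eq_single j]
    · simp
    · intro k _ hk; simp [Pi.single_eq_of_ne hk]
    · simp
  have h2 : ∑ k, (Pi.single j 1 : Fin M → ℝ) k * (A k).trace = (A j).trace := by
    rw [Finset.sum_eq_single j]
    · simp
    · intro k _ hk; simp [Pi.single_eq_of_ne hk]
    · simp
  unfold Cp
  rw [h1, h2]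
  generalize (A j).mulVec (f + ξ) + b j = m
  congr 1
  simp only [sqNorm, dotProduct, Finset.mul_sum, ← Finset.sum_sub_distrib, Pi.sub_apply, Pi.add_apply]
  apply Finset.sum_congr rfl
  intro i _
  ring

lemma deterministic {n M : ℕ} (A : Fin M → Matrix (Fin n) (Fin n) ℝ) (b : Fin M → Fin n → ℝ)
    (σ : ℝ) (f ξ : Fin n → ℝ) (j k : Fin M) (e t : ℝ) (he : 0 < e) 
    (hC : Cp A b σ (f + ξ) (Pi.single j 1) ≤ Cp A b σ (f + ξ) (Pi.single k 1))
    (hZ : 2 * (ξ ⬝ᵥ (A j - A k).mulVec ξ) + 2 * (ξ ⬝ᵥ ((A j - A k).mulVec f + b j - b k))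
      - e * sqNorm ((A j - A k).mulVec ξ + ((A j - A k).mulVec f + b j - b k))
      - 2 * σ^2 * (A j - A k).trace ≤ t) :
    (1 - 2*e) * sqNorm ((A j).mulVec (f + ξ) + b j - f) ≤
      (1 + 2*e) * sqNorm ((A k).mulVec (f + ξ) + b k - f) + t := by
  rw [Cp_single, Cp_single] at hC
  set mj := (A j).mulVec (f + ξ) + b j with hmj
  set mk := (A k).mulVec (f + ξ) + b k with hmk
  have h1 : (A j - A k).mulVec ξ + ((A j - A k).mulVec f + b j - b k) = mj - mk := by
    rw [hmj, hmk, Matrix.sub_mulVec, Matrix.sub_mulVec, Matrix.mulVec_add, Matrix.mulVec_add]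
    abel
  have h2 : ξ ⬝ᵥ (A j - A k).mulVec ξ + ξ ⬝ᵥ ((A j - A k).mulVec f + b j - b k)
      = ξ ⬝ᵥ mj - ξ ⬝ᵥ mk := by
    rw [← dotProduct_add, h1, dotProduct_sub]
  rw [h1, Matrix.trace_sub] at hZ
  have h3 := sqNorm_sub_le (mj - f) (mk - f)
  rw [sub_sub_sub_cancel_right] at h3
  have h4 := mul_le_mul_of_nonneg_left h3 he.le
  linarith

/-- **Proposition 3.1**: the empirical risk minimizer over the `C_p` criterion
satisfies a non-sharp oracle inequality. -/
theorem erm_oracle_inequality :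
    ∃ c C : ℝ, 0 < c ∧ 0 < C ∧
      ∀ (n M : ℕ), 2 ≤ M → ∀ (σ : ℝ) (f : Fin n → ℝ)
        (A : Fin M → Matrix (Fin n) (Fin n) ℝ) (b : Fin M → Fin n → ℝ),
        (∀ j, opNorm (A j) ≤ 1) →
        ∀ (Ω : Type) (_ : MeasurableSpace Ω) (P : Measure Ω),
          IsProbabilityMeasure P →
          ∀ (ξ : Ω → Fin n → ℝ), Measurable ξ → P.map ξ = gaussPi n σ →
          ∀ (Jhat : Ω → Fin M),
            (∀ ω j, Cp A b σ (f + ξ ω) (Pi.single (Jhat ω) 1)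
              ≤ Cp A b σ (f + ξ ω) (Pi.single j 1)) →
          ∀ ε : ℝ, 0 < ε → ε < c →
          ∀ x : ℝ, 0 < x →
            ENNReal.ofReal (1 - 2 * Real.exp (-x)) ≤
              P {ω | ∀ k, sqNorm ((A (Jhat ω)).mulVec (f + ξ ω) + b (Jhat ω) - f) ≤
                  (1 + ε) * sqNorm ((A k).mulVec (f + ξ ω) + b k - f)
                    + C * σ ^ 2 * (x + 2 * Real.log M) / ε} := by
  refine ⟨1, 512, one_pos, by norm_num, ?_⟩
  intro n M hM σ f A b hA Ω _ P hP ξ hξ hlaw Jhat hJ ε hε hε1 x hx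
  have hMpos : (0:ℝ) < M := by positivity
  have hlog : 0 ≤ Real.log M := Real.log_nonneg (by exact_mod_cast (by omega : 1 ≤ M))
  set u := x + 2 * Real.log M with hu
  have hu0 : 0 < u := by positivity
  have hD : ∀ j k x, sqNorm ((A j - A k).mulVec x) ≤ 4 * sqNorm x := by
    intro j k x
    rw [Matrix.sub_mulVec]
    have := sqNorm_sub_le ((A j).mulVec x) ((A k).mulVec x)
    linarith [opNorm_bound _ (hA j) x, opNorm_bound _ (hA k) x]
  have hfin : ∀ ω, (∀ j k, 2 * (ξ ω ⬝ᵥ (A j - A k).mulVec (ξ ω))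
        + 2 * (ξ ω ⬝ᵥ ((A j - A k).mulVec f + b j - b k))
      - (ε/8) * sqNorm ((A j - A k).mulVec (ξ ω) + ((A j - A k).mulVec f + b j - b k))
      - 2 * σ^2 * (A j - A k).trace ≤ 32 * σ^2 * u / (ε/8)) →
      ∀ k, sqNorm ((A (Jhat ω)).mulVec (f + ξ ω) + b (Jhat ω) - f) ≤
                  (1 + ε) * sqNorm ((A k).mulVec (f + ξ ω) + b k - f)
                    + 512 * σ ^ 2 * u / ε := by
    intro ω h k
    have h1 := deterministic A b σ f (ξ ω) (Jhat ω) k (ε/8) _ (by positivity) (hJ ω k) (h _ k)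
    have e1 : 32 * σ^2 * u / (ε/8) = 256 * (σ^2 * u / ε) := by field_simp; ring
    have e2 : 512 * σ^2 * u / ε = 512 * (σ^2 * u / ε) := by ring
    rw [e1] at h1
    rw [e2]
    have hs : 0 ≤ σ^2 * u / ε := by positivity
    generalize σ^2 * u / ε = s at *
    have hRk := sqNorm_nonneg' ((A k).mulVec (f + ξ ω) + b k - f)
    generalize sqNorm ((A k).mulVec (f + ξ ω) + b k - f) = Rk at *
    generalize sqNorm ((A (Jhat ω)).mulVec (f + ξ ω) + b (Jhat ω) - f) = Rj at *
    have hpos : 0 < 1 - 2 * (ε/8) := by linarith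
    refine le_of_mul_le_mul_left (h1.trans ?_) hpos
    have h5 : 0 ≤ ε * Rk * (1 - ε) := mul_nonneg (mul_nonneg hε.le hRk) (by linarith)
    have h6 : 0 ≤ s * (1 - ε) := mul_nonneg hs (by linarith)
    have h7 : 0 ≤ ε * Rk := mul_nonneg hε.le hRk
    nlinarith
  by_cases hσ : σ = 0
  · have h0 : ∀ᵐ ω ∂P, ξ ω = 0 := by
      have hm : P.map ξ {0}ᶜ = 0 := by
        rw [hlaw, gaussPi_eq, hσ, Measure.map_apply (by fun_prop) (measurableSet_singleton _).compl]
        simp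
      rw [Measure.map_apply hξ (measurableSet_singleton _).compl] at hm
      exact hm
    have h1 : ∀ᵐ ω ∂P, ∀ k, sqNorm ((A (Jhat ω)).mulVec (f + ξ ω) + b (Jhat ω) - f) ≤
                  (1 + ε) * sqNorm ((A k).mulVec (f + ξ ω) + b k - f)
                    + 512 * σ ^ 2 * u / ε := by
      filter_upwards [h0] with ω hω
      apply hfin
      intro j k
      rw [hω, hσ]
      simp only [zero_dotProduct]
      have := sqNorm_nonneg' ((A j - A k).mulVec 0 + ((A j - A k).mulVec f + b j - b k))
      have := mul_nonneg (by positivity : 0 ≤ ε/8) this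
      norm_num at this ⊢
      linarith
    rw [measure_congr (Filter.eventuallyEq_univ.2 h1), measure_univ]
    rw [ENNReal.ofReal_le_one]
    linarith [Real.exp_pos (-x)]
  · set B : Fin M × Fin M → Set (Fin n → ℝ) := fun p => {z | 32 * σ^2 * u / (ε/8) ≤
      2 * (z ⬝ᵥ (A p.1 - A p.2).mulVec z)
        + 2 * (z ⬝ᵥ ((A p.1 - A p.2).mulVec f + b p.1 - b p.2))
      - (ε/8) * sqNorm ((A p.1 - A p.2).mulVec z + ((A p.1 - A p.2).mulVec f + b p.1 - b p.2))
      - 2 * σ^2 * (A p.1 - A p.2).trace} with hB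
    have hBm : ∀ p, MeasurableSet (B p) := fun p => meas_form _ _ _ _ _
    have hBp : ∀ p, P (ξ ⁻¹' B p) ≤ ENNReal.ofReal (Real.exp (-u)) := by
      intro p
      rw [← Measure.map_apply hξ (hBm p), hlaw]
      exact tail_sigma _ _ (hD _ _) _ (by positivity) (by linarith) u σ hσ
    have hU : P (⋃ p, ξ ⁻¹' B p) ≤ ENNReal.ofReal (Real.exp (-x)) := by
      refine (measure_iUnion_fintype_le P _).trans ((Finset.sum_le_sum fun p _ => hBp p).trans ?_)
      rw [Finset.sum_const, nsmul_eq_mul, Finset.card_univ, Fintype.card_prod, Fintype.card_fin,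
        ← ENNReal.ofReal_natCast, ← ENNReal.ofReal_mul (by positivity)]
      apply ENNReal.ofReal_le_ofReal
      have : Real.exp (-u) = Real.exp (-x) * ((M:ℝ)^2)⁻¹ := by
        rw [hu, neg_add, Real.exp_add, Real.exp_neg (2 * _), mul_comm 2 (Real.log M),
          Real.exp_mul, Real.exp_log hMpos]
        norm_num
      rw [this]
      push_cast
      apply le_of_eq
      field_simp
    have hUm : MeasurableSet (⋃ p, ξ ⁻¹' B p) := MeasurableSet.iUnion fun p => hξ (hBm p)
    have hsub : (⋃ p, ξ ⁻¹' B p)ᶜ ⊆ {ω | ∀ k, sqNorm ((A (Jhat ω)).mulVec (f + ξ ω) + b (Jhat ω) - f) ≤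
                  (1 + ε) * sqNorm ((A k).mulVec (f + ξ ω) + b k - f)
                    + 512 * σ ^ 2 * u / ε} := by
      intro ω hω
      apply hfin
      intro j k
      by_contra hcon
      push Not at hcon
      exact hω (Set.mem_iUnion.2 ⟨(j, k), hcon.le⟩)
    refine le_trans ?_ (measure_mono hsub)
    rw [prob_compl_eq_one_sub hUm]
    refine le_trans ?_ (tsub_le_tsub_left hU 1)
    rw [← ENNReal.ofReal_one, ← ENNReal.ofReal_sub _ (Real.exp_pos _).le]
    apply ENNReal.ofReal_le_ofReal
    linarith [Real.exp_pos (-x)]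

end
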